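/- Let T be a bounded linear operator on a complex separable Banach space X. Assume that T has a perfectly spanning set of unimodular eigenvectors and that the periodic eigenvectors of T are dense in the set of all unimodular eigenvectors of T. Then F̄_T(HC(T)) is a dense G_δ subset of F̄_T(X). -/

import Mathlib

open MeasureTheory Filter Topology Set

/-- The periodic measure `ν_a = (1/N) ∑_{n<N} δ_{T^n a}` associated with a point `a`
and a period `N`. -/
noncomputable def periodicMeasure {X : Type*} [MeasurableSpace X] (T : X → X)
    (a : X) (N : ℕ) : Measure X :=
  (N : ENNReal)⁻¹ • ∑ n ∈ Finset.range N, Measure.dirac (T^[n] a)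

/-- `F_T(X)`: the convex hull of the set of periodic measures for `T`, as a subset of
the space of Borel probability measures on `X`. -/
def FT {X : Type*} [TopologicalSpace X] [MeasurableSpace X] (T : X → X) :
    Set (ProbabilityMeasure X) :=
  {μ | ∃ (k : ℕ) (c : Fin k → ENNReal) (a : Fin k → X) (N : Fin k → ℕ),
    (∑ i, c i) = 1 ∧ (∀ i, 1 ≤ N i ∧ T^[N i] (a i) = a i) ∧
    (↑μ : Measure X) = ∑ i, c i • periodicMeasure T (a i) (N i)}

/-!
A vector is hypercyclic iff its orbit meets every member `V` of a countable basis, and the set of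
points whose orbit meets `V` is open. The probability measures giving mass one to an open set form
a `G_δ`, and the space of probability measures on a Polish space is completely metrizable (a totally
bounded set for the Lévy–Prokhorov metric is tight, hence relatively compact). By Baire it is enough
to approximate a periodic measure by measures of periodic orbits through a prescribed open set `V`,
and for this it suffices that every vector is a limit of periodic points `w` whose orbit has
arbitrarily small mean norm: if `a` is periodic and `a + w ∈ V`, then the orbit of `a + w` shadows
that of `a` in mean.

Such vectors form a closed subspace, so only a spanning set of eigenvectors `x` has to be treated.
Discarding countably many eigenvalues, every neighbourhood of `x` contains eigenvectors for
uncountably many unimodular eigenvalues, hence by density of the periodic eigenvectors for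
infinitely many roots of unity. Averaging `k` of them that are close to `x` gives a periodic point
`w` close to `x`, and as the sequences `n ↦ z ^ n` for distinct roots of unity `z` are orthogonal
over a common period, the orbit of `w` has mean norm about `‖x‖ / √k`.
-/

section ProbabilityMeasureComplete

open Metric TopologicalSpace

variable {X : Type*}

lemma measure_compl_thickening_le_of_levyProkhorovEDist_lt [PseudoEMetricSpace X]
    [MeasurableSpace X] [OpensMeasurableSpace X] {μ ν : Measure X} {c : ENNReal}
    (h : levyProkhorovEDist μ ν < c) (K : Set X) :
    ν (thickening c.toReal K)ᶜ ≤ μ Kᶜ + c :=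
  (right_measure_le_of_levyProkhorovEDist_lt h isOpen_thickening.measurableSet.compl).trans <|
    add_le_add_left (measure_mono (thickening_compl_thickening_self_subset_compl _ K)) c

lemma exists_isCompact_measure_compl_thickening_le_of_totallyBounded [PseudoEMetricSpace X]
    [CompleteSpace X] [SecondCountableTopology X] [MeasurableSpace X] [BorelSpace X]
    {S : Set (LevyProkhorov (ProbabilityMeasure X))} (hS : TotallyBounded S)
    {δ : ℝ} (hδ : 0 < δ) {ε : ENNReal} (hε : 0 < ε) :
    ∃ K : Set X, IsCompact K ∧ ∀ μ ∈ S, (μ.toMeasure : Measure X) (thickening δ K)ᶜ ≤ ε := by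
  set c : ENNReal := min (ENNReal.ofReal δ) (ε / 2)
  have c_pos : 0 < c := lt_min (ENNReal.ofReal_pos.2 hδ) (ENNReal.half_pos hε.ne')
  have c_le : c.toReal ≤ δ := ENNReal.toReal_le_of_le_ofReal hδ.le (min_le_left _ _)
  have tight (ν : LevyProkhorov (ProbabilityMeasure X)) :
      ∃ K : Set X, IsCompact K ∧ (ν.toMeasure : Measure X) Kᶜ ≤ ε / 2 := by
    simpa using isTightMeasureSet_iff_exists_isCompact_measure_compl_le.1
      (isTightMeasureSet_singleton (μ := (ν.toMeasure : Measure X))) _ (ENNReal.half_pos hε.ne')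
  choose K K_compact hK using tight
  obtain ⟨t, t_fin, ht⟩ := EMetric.totallyBounded_iff.1 hS c c_pos
  refine ⟨⋃ ν ∈ t, K ν, t_fin.isCompact_biUnion fun ν _ ↦ K_compact ν, fun μ hμ ↦ ?_⟩
  obtain ⟨ν, hνt, hμν⟩ := mem_iUnion₂.1 (ht hμ)
  calc (μ.toMeasure : Measure X) (thickening δ (⋃ ν ∈ t, K ν))ᶜ
      ≤ (μ.toMeasure : Measure X) (thickening c.toReal (K ν))ᶜ := by
        refine measure_mono (compl_subset_compl.2 ((thickening_mono c_le _).trans ?_))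
        exact thickening_subset_of_subset δ (subset_biUnion_of_mem (u := K) hνt)
    _ ≤ (ν.toMeasure : Measure X) (K ν)ᶜ + c :=
        measure_compl_thickening_le_of_levyProkhorovEDist_lt (mem_eball'.1 hμν) _
    _ ≤ ε / 2 + ε / 2 := add_le_add (hK ν) (min_le_right _ _)
    _ = ε := ENNReal.add_halves ε

lemma totallyBounded_iInter_cthickening [PseudoMetricSpace X] {K : ℕ → Set X}
    (hK : ∀ j, TotallyBounded (K j)) {δ : ℕ → ℝ} (hδ : Tendsto δ atTop (𝓝 0)) :
    TotallyBounded (⋂ j, cthickening (δ j) (K j)) := by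
  refine totallyBounded_iff.2 fun r hr ↦ ?_
  obtain ⟨j, hj⟩ := (hδ.eventually_lt_const (half_pos hr)).exists
  obtain ⟨t, t_fin, ht⟩ := totallyBounded_iff.1 (hK j) (r / 2) (half_pos hr)
  refine ⟨t, t_fin, fun x hx ↦ ?_⟩
  obtain ⟨z, hzK, hxz⟩ := mem_thickening_iff.1 <|
    cthickening_subset_thickening' (half_pos hr) hj (K j) (mem_iInter.1 hx j)
  obtain ⟨y, hyt, hzy⟩ := mem_iUnion₂.1 (ht hzK)
  refine mem_iUnion₂.2 ⟨y, hyt, mem_ball.2 ?_⟩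
  linarith [dist_triangle x z y, mem_ball.1 hzy]

lemma isTightMeasureSet_of_totallyBounded_thickening [PseudoMetricSpace X] [CompleteSpace X]
    [MeasurableSpace X] {S : Set (Measure X)}
    (h : ∀ δ : ℝ, 0 < δ → ∀ ε : ENNReal, 0 < ε →
      ∃ K : Set X, TotallyBounded K ∧ ∀ μ ∈ S, μ (thickening δ K)ᶜ ≤ ε) :
    IsTightMeasureSet S := by
  rw [isTightMeasureSet_iff_exists_isCompact_measure_compl_le]
  intro ε hε
  obtain ⟨e, e_pos, he⟩ := ENNReal.exists_pos_sum_of_countable' hε.ne' ℕ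
  choose K K_bdd hK using fun j : ℕ ↦ h (1 / ((j : ℝ) + 1)) (by positivity) (e j) (e_pos j)
  refine ⟨⋂ j : ℕ, cthickening (1 / ((j : ℝ) + 1)) (K j), ?_, fun μ hμ ↦ ?_⟩
  · exact (totallyBounded_iInter_cthickening K_bdd
      tendsto_one_div_add_atTop_nhds_zero_nat).isCompact_of_isClosed
        (isClosed_iInter fun _ ↦ isClosed_cthickening)
  calc μ (⋂ j : ℕ, cthickening (1 / ((j : ℝ) + 1)) (K j))ᶜ
      ≤ ∑' j : ℕ, μ (cthickening (1 / ((j : ℝ) + 1)) (K j))ᶜ := by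
        rw [compl_iInter]
        exact measure_iUnion_le _
    _ ≤ ∑' j, e j := ENNReal.tsum_le_tsum fun j ↦
        (measure_mono (compl_subset_compl.2 (thickening_subset_cthickening _ _))).trans (hK j μ hμ)
    _ ≤ ε := he.le

lemma isCompact_closure_of_totallyBounded_levyProkhorov [MetricSpace X] [CompleteSpace X]
    [SecondCountableTopology X] [MeasurableSpace X] [BorelSpace X]
    {S : Set (LevyProkhorov (ProbabilityMeasure X))} (hS : TotallyBounded S) :
    IsCompact (closure S) := by
  let e := LevyProkhorov.probabilityMeasureHomeomorph (Ω := X)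
  have tight : IsTightMeasureSet {((μ : ProbabilityMeasure X) : Measure X) | μ ∈ e ⁻¹' S} := by
    refine isTightMeasureSet_of_totallyBounded_thickening fun δ hδ ε hε ↦ ?_
    obtain ⟨K, hK, hKS⟩ :=
      exists_isCompact_measure_compl_thickening_le_of_totallyBounded hS hδ hε
    exact ⟨K, hK.totallyBounded, by rintro _ ⟨μ, hμ, rfl⟩; exact hKS _ hμ⟩
  simpa only [← e.preimage_closure, e.isCompact_preimage] using
    isCompact_closure_of_isTightMeasureSet tight

lemma completeSpace_levyProkhorov [MetricSpace X] [CompleteSpace X]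
    [SecondCountableTopology X] [MeasurableSpace X] [BorelSpace X] :
    CompleteSpace (LevyProkhorov (ProbabilityMeasure X)) := by
  refine Metric.complete_of_cauchySeq_tendsto fun u hu ↦ ?_
  obtain ⟨μ, -, hμ⟩ := cauchySeq_tendsto_of_isComplete
    (isCompact_closure_of_totallyBounded_levyProkhorov hu.totallyBounded_range).isComplete
    (fun n ↦ subset_closure (mem_range_self n)) hu
  exact ⟨μ, hμ⟩

lemma isCompletelyMetrizableSpace_probabilityMeasure [TopologicalSpace X] [PolishSpace X]
    [MeasurableSpace X] [BorelSpace X] :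
    IsCompletelyMetrizableSpace (ProbabilityMeasure X) := by
  let := upgradeIsCompletelyMetrizable X
  have := completeSpace_levyProkhorov (X := X)
  exact (LevyProkhorov.probabilityMeasureHomeomorph (Ω := X)).isClosedEmbedding
    |>.IsCompletelyMetrizableSpace

end ProbabilityMeasureComplete

section OpenSetsOfMeasures

variable {X : Type*} [MeasurableSpace X] [TopologicalSpace X] [OpensMeasurableSpace X]

lemma isOpen_setOf_lt_measure_of_isOpen [HasOuterApproxClosed X] {G : Set X} (hG : IsOpen G)
    (c : ENNReal) : IsOpen {m : ProbabilityMeasure X | c < (m : Measure X) G} := by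
  refine isOpen_iff_eventually.2 fun m hm ↦ ?_
  exact eventually_lt_of_lt_liminf <| lt_of_lt_of_le hm <|
    ProbabilityMeasure.le_liminf_measure_open_of_tendsto tendsto_id hG

lemma isGδ_setOf_measure_eq_one [HasOuterApproxClosed X] {G : Set X} (hG : IsOpen G) :
    IsGδ {m : ProbabilityMeasure X | (m : Measure X) G = 1} := by
  obtain ⟨c, -, hc, hc_lim⟩ := exists_seq_strictMono_tendsto' (zero_lt_one (α := ENNReal))
  have : {m : ProbabilityMeasure X | (m : Measure X) G = 1} =
      ⋂ n, {m : ProbabilityMeasure X | c n < (m : Measure X) G} := by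
    ext m
    refine ⟨fun hm ↦ mem_iInter.2 fun n ↦ (hc n).2.trans_eq (Eq.symm hm), fun hm ↦ ?_⟩
    exact le_antisymm prob_le_one (le_of_tendsto' hc_lim fun n ↦ (mem_iInter.1 hm n).le)
  rw [this]
  exact .iInter_of_isOpen fun n ↦ isOpen_setOf_lt_measure_of_isOpen hG (c n)

lemma isGδ_and_dense_setOf_measure_iInter_eq_one [HasOuterApproxClosed X] {ι : Type*} [Countable ι]
    {S : Set (ProbabilityMeasure X)} [BaireSpace S] {G : ι → Set X} (hG : ∀ i, IsOpen (G i))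
    (hS : ∀ i, S ⊆ closure {m ∈ S | (m : Measure X) (G i) = 1}) :
    IsGδ {m : S | (m.1 : Measure X) (⋂ i, G i) = 1} ∧
      Dense {m : S | (m.1 : Measure X) (⋂ i, G i) = 1} := by
  have eq_iInter : {m : S | (m.1 : Measure X) (⋂ i, G i) = 1} =
      ⋂ i, {m : S | (m.1 : Measure X) (G i) = 1} := by
    ext m
    simp only [mem_ofPred_eq, mem_iInter,
      ← mem_ae_iff_prob_eq_one (MeasurableSet.iInter fun i ↦ (hG i).measurableSet),
      ← mem_ae_iff_prob_eq_one (hG _).measurableSet, countable_iInter_mem]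
  have isGδ (i : ι) : IsGδ {m : S | (m.1 : Measure X) (G i) = 1} :=
    (isGδ_setOf_measure_eq_one (hG i)).preimage continuous_subtype_val
  have dense (i : ι) : Dense {m : S | (m.1 : Measure X) (G i) = 1} := by
    rw [Subtype.dense_iff]
    exact (hS i).trans (closure_mono fun m hm ↦ ⟨⟨m, hm.1⟩, hm.2, rfl⟩)
  rw [eq_iInter]
  exact ⟨.iInter isGδ, dense_iInter_of_Gδ isGδ dense⟩

end OpenSetsOfMeasures

section HitSet

variable {X : Type*}

/-- The set of points whose orbit under `T` meets `V`. -/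
def hitSet (T : X → X) (V : Set X) : Set X := ⋃ n : ℕ, T^[n] ⁻¹' V

lemma isOpen_hitSet [TopologicalSpace X] {T : X → X} (hT : Continuous T) {V : Set X}
    (hV : IsOpen V) : IsOpen (hitSet T V) :=
  isOpen_iUnion fun n ↦ hV.preimage (hT.iterate n)

lemma inter_orbit_nonempty_iff_mem_hitSet {T : X → X} {V : Set X} {x : X} :
    (V ∩ range fun n : ℕ ↦ T^[n] x).Nonempty ↔ x ∈ hitSet T V := by
  simp [Set.Nonempty, hitSet, and_comm]

lemma setOf_dense_orbit_eq_iInter_hitSet [TopologicalSpace X] (T : X → X) {B : Set (Set X)}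
    (hB : TopologicalSpace.IsTopologicalBasis B) (hB_empty : ∅ ∉ B) :
    {x : X | Dense (range fun n : ℕ ↦ T^[n] x)} = ⋂ V : B, hitSet T V := by
  ext x
  simp only [mem_ofPred_eq, hB.dense_iff, mem_iInter, Subtype.forall,
    inter_orbit_nonempty_iff_mem_hitSet]
  exact forall₂_congr fun V hV ↦
    forall_prop_of_true (nonempty_iff_ne_empty.2 (ne_of_mem_of_not_mem hV hB_empty))

lemma iterate_mem_hitSet_of_isPeriodicPt {T : X → X} {b : X} {N : ℕ}
    (hb : Function.IsPeriodicPt T N b) {V : Set X} (hbV : b ∈ V) {n : ℕ} (hn : n ≤ N) :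
    T^[n] b ∈ hitSet T V := by
  refine mem_iUnion.2 ⟨N - n, ?_⟩
  rwa [mem_preimage, ← Function.iterate_add_apply, Nat.sub_add_cancel hn, hb.eq]

end HitSet

section PeriodicOrbitSums

variable {X M : Type*} {T : X → X} {N : ℕ} {a : X}

lemma birkhoffSum_mul_of_isPeriodicPt [AddCommMonoid M] (ha : Function.IsPeriodicPt T N a)
    (g : X → M) (Q : ℕ) : birkhoffSum T g (N * Q) a = Q • birkhoffSum T g N a := by
  induction Q with
  | zero => simp
  | succ Q ih => rw [Nat.mul_succ, birkhoffSum_add, ih, (ha.mul_const Q).eq, succ_nsmul]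

lemma birkhoffAverage_mul_of_isPeriodicPt {R : Type*} [DivisionSemiring R] [CharZero R]
    [AddCommMonoid M] [Module R M] (ha : Function.IsPeriodicPt T N a) (g : X → M) {Q : ℕ}
    (hQ : Q ≠ 0) : birkhoffAverage R T g (N * Q) a = birkhoffAverage R T g N a := by
  rw [birkhoffAverage, birkhoffAverage, birkhoffSum_mul_of_isPeriodicPt ha,
    ← Nat.cast_smul_eq_nsmul R, smul_smul, Nat.cast_mul, (Nat.cast_commute N (Q : R)).eq,
    mul_inv_rev, inv_mul_cancel_right₀ (Nat.cast_ne_zero.2 hQ)]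

lemma periodicMeasure_mul_of_isPeriodicPt [MeasurableSpace X] (ha : Function.IsPeriodicPt T N a)
    {Q : ℕ} (hQ : Q ≠ 0) : periodicMeasure T a (N * Q) = periodicMeasure T a N := by
  have sum_eq := birkhoffSum_mul_of_isPeriodicPt ha Measure.dirac Q
  have hQ' : (Q : ENNReal) ≠ 0 := Nat.cast_ne_zero.2 hQ
  simp only [birkhoffSum] at sum_eq
  rw [periodicMeasure, periodicMeasure, sum_eq, ← Nat.cast_smul_eq_nsmul ENNReal, smul_smul,
    Nat.cast_mul, ENNReal.mul_inv (.inr (ENNReal.natCast_ne_top Q)) (.inr hQ'), mul_assoc,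
    ENNReal.inv_mul_cancel hQ' (ENNReal.natCast_ne_top Q), mul_one]

end PeriodicOrbitSums

section PeriodicMeasure

variable {X : Type*} [MeasurableSpace X] {T : X → X} {N : ℕ}

lemma periodicMeasure_eq_one_of_forall_iterate_mem (hN : N ≠ 0) {a : X} {s : Set X}
    (hs : ∀ n < N, T^[n] a ∈ s) : periodicMeasure T a N s = 1 := by
  have dirac_eq_one : ∀ n ∈ Finset.range N, Measure.dirac (T^[n] a) s = 1 := fun n hn ↦
    Measure.dirac_apply_of_mem (hs n (Finset.mem_range.1 hn))
  rw [periodicMeasure, Measure.smul_apply, Measure.finsetSum_apply,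
    Finset.sum_congr rfl dirac_eq_one, Finset.sum_const, Finset.card_range, nsmul_one, smul_eq_mul,
    ENNReal.inv_mul_cancel (Nat.cast_ne_zero.2 hN) (ENNReal.natCast_ne_top N)]

lemma isProbabilityMeasure_periodicMeasure (T : X → X) (a : X) (hN : N ≠ 0) :
    IsProbabilityMeasure (periodicMeasure T a N) :=
  ⟨periodicMeasure_eq_one_of_forall_iterate_mem hN fun _ _ ↦ mem_univ _⟩

lemma integral_periodicMeasure {E : Type*} [NormedAddCommGroup E] [NormedSpace ℝ E]
    [CompleteSpace E] {f : X → E} (hf : StronglyMeasurable f) (T : X → X) (a : X) (N : ℕ) :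
    ∫ x, f x ∂periodicMeasure T a N = birkhoffAverage ℝ T f N a := by
  have integrable (x : X) : Integrable f (Measure.dirac x) :=
    integrable_dirac' hf (by finiteness)
  rw [periodicMeasure, integral_smul_measure, integral_finsetSum_measure fun _ _ ↦ integrable _]
  simp [birkhoffAverage, birkhoffSum, integral_dirac' _ _ hf]

end PeriodicMeasure

section MeanOrbitDist

variable {X : Type*} [PseudoMetricSpace X]

/-- The mean of the distances between the first `M` points of the orbits of `a` and `b`. -/
noncomputable def meanOrbitDist (T : X → X) (M : ℕ) (a b : X) : ℝ :=
  (∑ n ∈ Finset.range M, dist (T^[n] a) (T^[n] b)) / M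

lemma dist_birkhoffAverage_le_mul_meanOrbitDist {E : Type*} [NormedAddCommGroup E]
    [NormedSpace ℝ E] {f : X → E} {L : NNReal} (hf : LipschitzWith L f) (T : X → X) (M : ℕ)
    (a b : X) :
    dist (birkhoffAverage ℝ T f M a) (birkhoffAverage ℝ T f M b) ≤ L * meanOrbitDist T M a b := by
  refine (dist_birkhoffAverage_birkhoffAverage_le ℝ T f M a b).trans ?_
  rw [meanOrbitDist, ← mul_div_assoc, Finset.mul_sum]
  gcongr
  exact hf.dist_le_mul _ _

variable [MeasurableSpace X] [OpensMeasurableSpace X]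

lemma tendsto_of_tendsto_meanOrbitDist {ι : Type*} {l : Filter ι} [l.IsCountablyGenerated]
    {T : X → X} {a : X} {b : ι → X} {M : ι → ℕ} {ν : ProbabilityMeasure X}
    {μ : ι → ProbabilityMeasure X} (hν : ∀ i, (ν : Measure X) = periodicMeasure T a (M i))
    (hμ : ∀ i, (μ i : Measure X) = periodicMeasure T (b i) (M i))
    (h : Tendsto (fun i ↦ meanOrbitDist T (M i) (b i) a) l (𝓝 0)) : Tendsto μ l (𝓝 ν) := by
  rw [tendsto_iff_forall_lipschitz_integral_tendsto]
  rintro f - ⟨L, hf⟩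
  refine tendsto_iff_dist_tendsto_zero.2 <| squeeze_zero (fun _ ↦ dist_nonneg) (fun i ↦ ?_)
    (by simpa using h.const_mul (L : ℝ))
  have hf_meas := hf.continuous.stronglyMeasurable
  rw [hμ i, hν i, integral_periodicMeasure hf_meas, integral_periodicMeasure hf_meas]
  exact dist_birkhoffAverage_le_mul_meanOrbitDist hf T (M i) (b i) a

end MeanOrbitDist

section Mixture

variable {X ι : Type*} [MeasurableSpace X] [Fintype ι]

/-- The convex combination `∑ i, c i • μ i` of probability measures. -/
noncomputable def mixture (c : ι → ENNReal) (hc : ∑ i, c i = 1)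
    (μ : ι → ProbabilityMeasure X) : ProbabilityMeasure X :=
  ⟨∑ i, c i • (μ i : Measure X), ⟨by simp [hc]⟩⟩

lemma continuous_mixture [TopologicalSpace X] [OpensMeasurableSpace X] {c : ι → ENNReal}
    (hc : ∑ i, c i = 1) : Continuous (mixture (X := X) c hc) := by
  have c_ne_top (i : ι) : c i ≠ ⊤ :=
    ENNReal.sum_ne_top.1 (hc.trans_ne ENNReal.one_ne_top) i (Finset.mem_univ i)
  refine ProbabilityMeasure.continuous_iff_forall_continuous_lintegral.2 fun f ↦ ?_
  simp only [mixture, ProbabilityMeasure.coe_mk, lintegral_finsetSum_measure,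
    lintegral_smul_measure, smul_eq_mul]
  exact continuous_finsetSum _ fun i _ ↦ (ENNReal.continuous_const_mul (c_ne_top i)).comp <|
    (ProbabilityMeasure.continuous_lintegral_boundedContinuousFunction f).comp (continuous_apply i)

lemma mixture_apply_eq_one {c : ι → ENNReal} (hc : ∑ i, c i = 1) {μ : ι → ProbabilityMeasure X}
    {s : Set X} (hs : ∀ i, (μ i : Measure X) s = 1) : (mixture c hc μ : Measure X) s = 1 := by
  simp [mixture, hs, hc]

end Mixture

section DenseFT

variable {X : Type*}

/-- The measures carried by a periodic orbit of `T` that meets `V`. -/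
def periodicMeasuresThrough [MeasurableSpace X] (T : X → X) (V : Set X) :
    Set (ProbabilityMeasure X) :=
  {ν | ∃ b ∈ V, ∃ N, 0 < N ∧ Function.IsPeriodicPt T N b ∧
    (ν : Measure X) = periodicMeasure T b N}

lemma periodicMeasuresThrough_mono [MeasurableSpace X] (T : X → X) {U V : Set X} (h : U ⊆ V) :
    periodicMeasuresThrough T U ⊆ periodicMeasuresThrough T V :=
  fun _ ⟨b, hb, hN⟩ ↦ ⟨b, h hb, hN⟩

lemma measure_hitSet_eq_one_of_mem_periodicMeasuresThrough [MeasurableSpace X] {T : X → X}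
    {V : Set X} {ν : ProbabilityMeasure X} (hν : ν ∈ periodicMeasuresThrough T V) :
    (ν : Measure X) (hitSet T V) = 1 := by
  obtain ⟨b, hbV, N, hN, hb, hν⟩ := hν
  rw [hν]
  exact periodicMeasure_eq_one_of_forall_iterate_mem hN.ne' fun n hn ↦
    iterate_mem_hitSet_of_isPeriodicPt hb hbV hn.le

lemma mem_FT_iff_exists_mixture [TopologicalSpace X] [MeasurableSpace X] {T : X → X}
    {m : ProbabilityMeasure X} :
    m ∈ FT T ↔ ∃ (k : ℕ) (c : Fin k → ENNReal) (hc : ∑ i, c i = 1)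
      (ν : Fin k → ProbabilityMeasure X),
      (∀ i, ν i ∈ periodicMeasuresThrough T univ) ∧ m = mixture c hc ν := by
  constructor
  · rintro ⟨k, c, a, N, hc, ha, hm⟩
    have prob (i : Fin k) : IsProbabilityMeasure (periodicMeasure T (a i) (N i)) :=
      isProbabilityMeasure_periodicMeasure T (a i) (Nat.ne_of_gt (ha i).1)
    exact ⟨k, c, hc, fun i ↦ ⟨periodicMeasure T (a i) (N i), prob i⟩,
      fun i ↦ ⟨a i, mem_univ _, N i, (ha i).1, (ha i).2, rfl⟩, Subtype.ext hm⟩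
  · rintro ⟨k, c, hc, ν, hν, rfl⟩
    choose a _ N hN ha hν using hν
    exact ⟨k, c, a, N, hc, fun i ↦ ⟨hN i, ha i⟩, by simp [mixture, hν]⟩

/-- Every periodic orbit of `T` is shadowed in mean by periodic orbits meeting any given nonempty
open set: for a periodic point `a` of period `N` there is a nearby one in the sense of
`meanOrbitDist` in every nonempty open `V`, whose period is a multiple of `N`. -/
def PeriodicPointsMeanDense [PseudoMetricSpace X] (T : X → X) : Prop :=
  ∀ ⦃a : X⦄ ⦃N : ℕ⦄, 0 < N → Function.IsPeriodicPt T N a →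
    ∀ ⦃V : Set X⦄, IsOpen V → V.Nonempty → ∀ ⦃ε : ℝ⦄, 0 < ε →
      ∃ b ∈ V, ∃ Q, 0 < Q ∧ Function.IsPeriodicPt T (N * Q) b ∧
        meanOrbitDist T (N * Q) b a ≤ ε

lemma periodicMeasuresThrough_univ_subset_closure [PseudoMetricSpace X] [MeasurableSpace X]
    [OpensMeasurableSpace X] {T : X → X} (hT : PeriodicPointsMeanDense T) {V : Set X}
    (hV : IsOpen V) (hV_ne : V.Nonempty) :
    periodicMeasuresThrough T univ ⊆ closure (periodicMeasuresThrough T V) := by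
  rintro ν ⟨a, -, N, hN, ha, hν⟩
  choose b hbV Q hQ hb hab using fun j : ℕ ↦
    hT hN ha hV hV_ne (Nat.one_div_pos_of_nat (α := ℝ) (n := j))
  have hM (j : ℕ) : 0 < N * Q j := Nat.mul_pos hN (hQ j)
  let μ (j : ℕ) : ProbabilityMeasure X :=
    ⟨periodicMeasure T (b j) (N * Q j), isProbabilityMeasure_periodicMeasure T _ (hM j).ne'⟩
  have mean_tendsto : Tendsto (fun j ↦ meanOrbitDist T (N * Q j) (b j) a) atTop (𝓝 0) :=
    squeeze_zero (fun j ↦ by unfold meanOrbitDist; positivity) hab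
      tendsto_one_div_add_atTop_nhds_zero_nat
  have μ_tendsto : Tendsto μ atTop (𝓝 ν) := tendsto_of_tendsto_meanOrbitDist
    (fun j ↦ hν.trans (periodicMeasure_mul_of_isPeriodicPt ha (hQ j).ne').symm)
    (fun _ ↦ rfl) mean_tendsto
  exact mem_closure_of_tendsto μ_tendsto (.of_forall fun j ↦ ⟨b j, hbV j, _, hM j, hb j, rfl⟩)

lemma FT_subset_closure_setOf_measure_hitSet_eq_one [PseudoMetricSpace X] [MeasurableSpace X]
    [OpensMeasurableSpace X] {T : X → X} (hT : PeriodicPointsMeanDense T) {V : Set X}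
    (hV : IsOpen V) (hV_ne : V.Nonempty) :
    FT T ⊆ closure {m ∈ FT T | (m : Measure X) (hitSet T V) = 1} := by
  intro m hm
  obtain ⟨k, c, hc, ν, hν, rfl⟩ := mem_FT_iff_exists_mixture.1 hm
  have ν_mem : ν ∈ closure (univ.pi fun _ ↦ periodicMeasuresThrough T V) := by
    rw [closure_pi_set]
    exact fun i _ ↦ periodicMeasuresThrough_univ_subset_closure hT hV hV_ne (hν i)
  refine map_mem_closure (continuous_mixture hc) ν_mem fun μ hμ ↦ ⟨?_, ?_⟩
  · exact mem_FT_iff_exists_mixture.2 ⟨k, c, hc, μ, fun i ↦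
      periodicMeasuresThrough_mono T (subset_univ V) (hμ i (mem_univ i)), rfl⟩
  · exact mixture_apply_eq_one hc fun i ↦
      measure_hitSet_eq_one_of_mem_periodicMeasuresThrough (hμ i (mem_univ i))

lemma closure_FT_subset_closure_setOf_measure_hitSet_eq_one [PseudoMetricSpace X]
    [MeasurableSpace X] [OpensMeasurableSpace X] {T : X → X} (hT : PeriodicPointsMeanDense T)
    {V : Set X} (hV : IsOpen V) (hV_ne : V.Nonempty) :
    closure (FT T) ⊆ closure {m ∈ closure (FT T) | (m : Measure X) (hitSet T V) = 1} :=
  closure_minimal ((FT_subset_closure_setOf_measure_hitSet_eq_one hT hV hV_ne).trans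
    (closure_mono fun _ hm ↦ ⟨subset_closure hm.1, hm.2⟩)) isClosed_closure

theorem isGδ_and_dense_setOf_measure_dense_orbit_eq_one [MetricSpace X] [CompleteSpace X]
    [SecondCountableTopology X] [MeasurableSpace X] [BorelSpace X] {T : X → X}
    (hT_cont : Continuous T) (hT : PeriodicPointsMeanDense T) :
    IsGδ {m : closure (FT T) |
        (m.1 : Measure X) {x : X | Dense (range fun n : ℕ ↦ T^[n] x)} = 1} ∧
      Dense {m : closure (FT T) |
        (m.1 : Measure X) {x : X | Dense (range fun n : ℕ ↦ T^[n] x)} = 1} := by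
  have := isCompletelyMetrizableSpace_probabilityMeasure (X := X)
  have : TopologicalSpace.IsCompletelyMetrizableSpace (closure (FT T)) :=
    isClosed_closure.isClosedEmbedding_subtypeVal.IsCompletelyMetrizableSpace
  have : Countable (TopologicalSpace.countableBasis X) :=
    (TopologicalSpace.countable_countableBasis X).to_subtype
  rw [setOf_dense_orbit_eq_iInter_hitSet T (TopologicalSpace.isBasis_countableBasis X)
    (TopologicalSpace.empty_notMem_countableBasis X)]
  have isOpen (V : TopologicalSpace.countableBasis X) : IsOpen (V : Set X) :=
    TopologicalSpace.isOpen_of_mem_countableBasis V.2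
  exact isGδ_and_dense_setOf_measure_iInter_eq_one (fun V ↦ isOpen_hitSet hT_cont (isOpen V))
    fun V ↦ closure_FT_subset_closure_setOf_measure_hitSet_eq_one hT (isOpen V)
      (TopologicalSpace.nonempty_of_mem_countableBasis V.2)

end DenseFT

section RootsOfUnity

open ComplexConjugate

lemma exists_pos_forall_mem_pow_eq_one {G : Type*} [Monoid G] {Λ : Finset G}
    (hΛ : ∀ z ∈ Λ, IsOfFinOrder z) : ∃ P, 0 < P ∧ ∀ z ∈ Λ, z ^ P = 1 :=
  ⟨∏ z ∈ Λ, orderOf z, Finset.prod_pos fun z hz ↦ (hΛ z hz).orderOf_pos,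
    fun _ hz ↦ orderOf_dvd_iff_pow_eq_one.1 (Finset.dvd_prod_of_mem orderOf hz)⟩

variable {P : ℕ}

lemma sum_pow_mul_conj_pow_of_pow_eq_one (hP : P ≠ 0) {z w : ℂ} (hz : z ^ P = 1)
    (hw : w ^ P = 1) :
    ∑ n ∈ Finset.range P, z ^ n * conj (w ^ n) = if z = w then (P : ℂ) else 0 := by
  have w_ne_zero : w ≠ 0 := by
    rintro rfl
    simp [hP] at hw
  have term_eq (n : ℕ) : z ^ n * conj (w ^ n) = (z / w) ^ n := by
    rw [map_pow, ← Complex.inv_eq_conj (Complex.norm_eq_one_of_pow_eq_one hw hP), ← mul_pow,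
      ← div_eq_mul_inv]
  simp only [term_eq]
  split_ifs with h
  · simp [h, w_ne_zero]
  · rw [geom_sum_eq (div_ne_one_of_ne h), div_pow, hz, hw, div_one, sub_self, zero_div]

lemma sum_sq_norm_sum_pow_of_pow_eq_one (hP : P ≠ 0) {Λ : Finset ℂ} (hΛ : ∀ z ∈ Λ, z ^ P = 1) :
    ∑ n ∈ Finset.range P, ‖∑ z ∈ Λ, z ^ n‖ ^ 2 = P * Λ.card := by
  rw [← Complex.ofReal_inj]
  push_cast
  calc ∑ n ∈ Finset.range P, (‖∑ z ∈ Λ, z ^ n‖ : ℂ) ^ 2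
      = ∑ n ∈ Finset.range P, ∑ z ∈ Λ, ∑ w ∈ Λ, z ^ n * conj (w ^ n) := by
        simp only [← Complex.mul_conj', map_sum, Finset.sum_mul_sum]
    _ = ∑ z ∈ Λ, ∑ w ∈ Λ, ∑ n ∈ Finset.range P, z ^ n * conj (w ^ n) := by
        rw [Finset.sum_comm]
        exact Finset.sum_congr rfl fun _ _ ↦ Finset.sum_comm
    _ = ∑ z ∈ Λ, ∑ w ∈ Λ, if z = w then (P : ℂ) else 0 :=
        Finset.sum_congr rfl fun z hz ↦ Finset.sum_congr rfl fun w hw ↦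
          sum_pow_mul_conj_pow_of_pow_eq_one hP (hΛ z hz) (hΛ w hw)
    _ = P * Λ.card := by simp [mul_comm]

lemma sum_norm_sum_pow_le_of_pow_eq_one (hP : P ≠ 0) {Λ : Finset ℂ} (hΛ : ∀ z ∈ Λ, z ^ P = 1) :
    ∑ n ∈ Finset.range P, ‖∑ z ∈ Λ, z ^ n‖ ≤ P * √Λ.card := by
  refine le_of_sq_le_sq ?_ (by positivity)
  calc (∑ n ∈ Finset.range P, ‖∑ z ∈ Λ, z ^ n‖) ^ 2
      ≤ P * ∑ n ∈ Finset.range P, ‖∑ z ∈ Λ, z ^ n‖ ^ 2 := by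
        simpa using sq_sum_le_card_mul_sum_sq (s := Finset.range P) (f := fun n ↦ ‖∑ z ∈ Λ, z ^ n‖)
    _ = (P * √Λ.card) ^ 2 := by
        rw [sum_sq_norm_sum_pow_of_pow_eq_one hP hΛ, mul_pow, Real.sq_sqrt (Nat.cast_nonneg _)]
        ring

end RootsOfUnity

section IterateHom

variable {F R M : Type*} [FunLike F M M] {T : F} {P : ℕ}

lemma iterate_map_smul [SMul R M] [MulActionHomClass F R M M] (T : F) (n : ℕ) (c : R) (w : M) :
    T^[n] (c • w) = c • T^[n] w :=
  Function.Commute.iterate_left (g := (c • ·)) (map_smul T c) n w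

lemma isPeriodicPt_add [Add M] [AddHomClass F M M] {v w : M} (hv : Function.IsPeriodicPt T P v)
    (hw : Function.IsPeriodicPt T P w) : Function.IsPeriodicPt T P (v + w) :=
  (iterate_map_add T P v w).trans (congrArg₂ _ hv hw)

lemma isPeriodicPt_smul [SMul R M] [MulActionHomClass F R M M] (c : R) {w : M}
    (hw : Function.IsPeriodicPt T P w) : Function.IsPeriodicPt T P (c • w) :=
  (iterate_map_smul T P c w).trans (congrArg _ hw)

section Eigenvectors

variable [Monoid R] [AddCommMonoid M] [MulAction R M] [AddMonoidHomClass F M M]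
  [MulActionHomClass F R M M] {Λ : Finset R} {y : R → M}

lemma iterate_sum_eigenvector (hy : ∀ z ∈ Λ, T (y z) = z • y z) (n : ℕ) :
    T^[n] (∑ z ∈ Λ, y z) = ∑ z ∈ Λ, z ^ n • y z := by
  induction n with
  | zero => simp
  | succ n ih =>
    rw [Function.iterate_succ_apply', ih, map_sum]
    exact Finset.sum_congr rfl fun z hz ↦ by rw [map_smul, hy z hz, smul_smul, pow_succ]

lemma isPeriodicPt_sum_eigenvector (hΛ : ∀ z ∈ Λ, z ^ P = 1) (hy : ∀ z ∈ Λ, T (y z) = z • y z) :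
    Function.IsPeriodicPt T P (∑ z ∈ Λ, y z) := by
  rw [Function.IsPeriodicPt, Function.IsFixedPt, iterate_sum_eigenvector hy]
  exact Finset.sum_congr rfl fun z hz ↦ by rw [hΛ z hz, one_smul]

end Eigenvectors

end IterateHom

section MeanOrbitNorm

variable {F 𝕜 X : Type*} [SeminormedAddCommGroup X] [FunLike F X X]

lemma birkhoffAverage_norm_add_le [AddHomClass F X X] (T : F) (P : ℕ) (v w : X) :
    birkhoffAverage ℝ T norm P (v + w) ≤
      birkhoffAverage ℝ T norm P v + birkhoffAverage ℝ T norm P w := by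
  simp only [birkhoffAverage, birkhoffSum, smul_eq_mul, ← mul_add, ← Finset.sum_add_distrib,
    iterate_map_add]
  gcongr
  exact norm_add_le _ _

lemma birkhoffAverage_norm_smul [NormedField 𝕜] [NormedSpace 𝕜 X] [MulActionHomClass F 𝕜 X X]
    (T : F) (P : ℕ) (c : 𝕜) (w : X) :
    birkhoffAverage ℝ T norm P (c • w) = ‖c‖ * birkhoffAverage ℝ T norm P w := by
  simp only [birkhoffAverage, birkhoffSum, smul_eq_mul, iterate_map_smul, norm_smul,
    ← Finset.mul_sum]
  ring

lemma meanOrbitDist_add_left [AddHomClass F X X] (T : F) (P : ℕ) (a w : X) :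
    meanOrbitDist T P (a + w) a = birkhoffAverage ℝ T norm P w := by
  simp [meanOrbitDist, birkhoffAverage, birkhoffSum, iterate_map_add, div_eq_inv_mul]

/-- The periodic points of `T` whose orbit has mean norm at most `ε`. -/
def periodicPtsOfMeanNormLE (T : X → X) (ε : ℝ) : Set X :=
  {w | ∃ P, 0 < P ∧ Function.IsPeriodicPt T P w ∧ birkhoffAverage ℝ T norm P w ≤ ε}

lemma add_mem_periodicPtsOfMeanNormLE [AddHomClass F X X] {T : F} {ε δ : ℝ} {v w : X}
    (hv : v ∈ periodicPtsOfMeanNormLE T ε) (hw : w ∈ periodicPtsOfMeanNormLE T δ) :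
    v + w ∈ periodicPtsOfMeanNormLE T (ε + δ) := by
  obtain ⟨P, hP, hPv, hεv⟩ := hv
  obtain ⟨Q, hQ, hQw, hδw⟩ := hw
  refine ⟨P * Q, Nat.mul_pos hP hQ, isPeriodicPt_add (hPv.mul_const Q) (hQw.const_mul P), ?_⟩
  calc birkhoffAverage ℝ T norm (P * Q) (v + w)
      ≤ birkhoffAverage ℝ T norm (P * Q) v + birkhoffAverage ℝ T norm (P * Q) w :=
        birkhoffAverage_norm_add_le T (P * Q) v w
    _ = birkhoffAverage ℝ T norm P v + birkhoffAverage ℝ T norm Q w := by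
        rw [birkhoffAverage_mul_of_isPeriodicPt hPv _ hQ.ne', mul_comm,
          birkhoffAverage_mul_of_isPeriodicPt hQw _ hP.ne']
    _ ≤ ε + δ := add_le_add hεv hδw

lemma smul_mem_periodicPtsOfMeanNormLE [NormedField 𝕜] [NormedSpace 𝕜 X]
    [MulActionHomClass F 𝕜 X X] {T : F} {ε : ℝ} {w : X} (c : 𝕜)
    (hw : w ∈ periodicPtsOfMeanNormLE T ε) : c • w ∈ periodicPtsOfMeanNormLE T (‖c‖ * ε) := by
  obtain ⟨P, hP, hPw, hεw⟩ := hw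
  refine ⟨P, hP, isPeriodicPt_smul c hPw, ?_⟩
  rw [birkhoffAverage_norm_smul]
  gcongr

lemma periodicPtsOfMeanNormLE_mono (T : X → X) {ε δ : ℝ} (h : ε ≤ δ) :
    periodicPtsOfMeanNormLE T ε ⊆ periodicPtsOfMeanNormLE T δ :=
  fun _ ⟨P, hP, hPw, hεw⟩ ↦ ⟨P, hP, hPw, hεw.trans h⟩

lemma zero_mem_periodicPtsOfMeanNormLE [ZeroHomClass F X X] (T : F) {ε : ℝ} (hε : 0 ≤ ε) :
    0 ∈ periodicPtsOfMeanNormLE T ε :=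
  ⟨1, one_pos, map_zero T, by simpa using hε⟩

section Submodule

variable [NormedField 𝕜] [NormedSpace 𝕜 X]

/-- The subspace of vectors that are, for every `ε > 0`, limits of periodic points of `T` whose
orbit has mean norm at most `ε`. -/
def meanNullPeriodicLimits (T : X →L[𝕜] X) : Submodule 𝕜 X where
  carrier := ⋂ ε > 0, closure (periodicPtsOfMeanNormLE T ε)
  zero_mem' := mem_iInter₂.2 fun _ hε ↦
    subset_closure (zero_mem_periodicPtsOfMeanNormLE T (le_of_lt hε))
  add_mem' {x y} hx hy := by
    rw [mem_iInter₂] at hx hy ⊢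
    intro ε hε
    refine map_mem_closure₂ continuous_add (hx _ (half_pos hε)) (hy _ (half_pos hε)) ?_
    intro v hv w hw
    simpa only [add_halves] using add_mem_periodicPtsOfMeanNormLE hv hw
  smul_mem' c x hx := by
    rw [mem_iInter₂] at hx ⊢
    intro ε hε
    have hδ : 0 < ε / (‖c‖ + 1) := by positivity
    refine map_mem_closure (continuous_const_smul c) (hx _ hδ) fun w hw ↦ ?_
    refine periodicPtsOfMeanNormLE_mono T ?_ (smul_mem_periodicPtsOfMeanNormLE c hw)
    rw [← mul_div_assoc, div_le_iff₀ (by positivity)]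
    linarith

lemma mem_meanNullPeriodicLimits {T : X →L[𝕜] X} {x : X} :
    x ∈ meanNullPeriodicLimits T ↔ ∀ ε > 0, x ∈ closure (periodicPtsOfMeanNormLE T ε) :=
  mem_iInter₂

lemma isClosed_meanNullPeriodicLimits (T : X →L[𝕜] X) :
    IsClosed (meanNullPeriodicLimits T : Set X) :=
  isClosed_biInter fun _ _ ↦ isClosed_closure

lemma periodicPointsMeanDense_of_meanNullPeriodicLimits_eq_top {T : X →L[𝕜] X}
    (hT : meanNullPeriodicLimits T = ⊤) : PeriodicPointsMeanDense T := by
  rintro a N hN ha V hV ⟨v, hv⟩ ε hε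
  have sub_mem : v - a ∈ meanNullPeriodicLimits T := hT ▸ Submodule.mem_top
  obtain ⟨w, hwV, P, hP, hw, hwε⟩ := mem_closure_iff.1 (mem_meanNullPeriodicLimits.1 sub_mem ε hε)
    ((a + ·) ⁻¹' V) (hV.preimage (continuous_const_add a)) (by simpa using hv)
  refine ⟨a + w, hwV, P, hP, isPeriodicPt_add (ha.mul_const P) (hw.const_mul N), ?_⟩
  rwa [meanOrbitDist_add_left, mul_comm, birkhoffAverage_mul_of_isPeriodicPt hw _ hN.ne']

end Submodule

end MeanOrbitNorm

section NearbyVectors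

variable {ι X : Type*} [SeminormedAddCommGroup X] {Λ : Finset ι} {y : ι → X} {x : X} {ε : ℝ}

lemma norm_sum_smul_le_of_norm_sub_le {𝕜 : Type*} [NormedField 𝕜] [NormedSpace 𝕜 X] {u : ι → 𝕜}
    (hu : ∀ i ∈ Λ, ‖u i‖ ≤ 1) (hy : ∀ i ∈ Λ, ‖y i - x‖ ≤ ε) :
    ‖∑ i ∈ Λ, u i • y i‖ ≤ ‖∑ i ∈ Λ, u i‖ * ‖x‖ + Λ.card * ε := by
  have sum_eq : ∑ i ∈ Λ, u i • y i = (∑ i ∈ Λ, u i) • x + ∑ i ∈ Λ, u i • (y i - x) := by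
    simp only [smul_sub, Finset.sum_sub_distrib, Finset.sum_smul, add_sub_cancel]
  have error_le : ‖∑ i ∈ Λ, u i • (y i - x)‖ ≤ Λ.card * ε := by
    rw [← nsmul_eq_mul]
    refine norm_sum_le_of_le Λ (fun i hi ↦ ?_) |>.trans_eq (Finset.sum_const ε)
    rw [norm_smul]
    exact (mul_le_of_le_one_left (norm_nonneg _) (hu i hi)).trans (hy i hi)
  rw [sum_eq]
  exact (norm_add_le _ _).trans (add_le_add (norm_smul _ _).le error_le)

lemma norm_inv_card_smul_sum_sub_le (𝕜 : Type*) [RCLike 𝕜] [NormedSpace 𝕜 X] (hΛ : Λ.Nonempty)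
    (hy : ∀ i ∈ Λ, ‖y i - x‖ ≤ ε) : ‖(Λ.card : 𝕜)⁻¹ • ∑ i ∈ Λ, y i - x‖ ≤ ε := by
  have card_ne_zero : Λ.card ≠ 0 := hΛ.card_ne_zero
  have sub_eq : (Λ.card : 𝕜)⁻¹ • ∑ i ∈ Λ, y i - x = (Λ.card : 𝕜)⁻¹ • ∑ i ∈ Λ, (y i - x) := by
    rw [Finset.sum_sub_distrib, Finset.sum_const, smul_sub, ← Nat.cast_smul_eq_nsmul 𝕜,
      inv_smul_smul₀ (Nat.cast_ne_zero.2 card_ne_zero)]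
  rw [sub_eq, norm_smul, norm_inv, RCLike.norm_natCast, inv_mul_le_iff₀ (by positivity),
    ← nsmul_eq_mul]
  exact (norm_sum_le_of_le Λ hy).trans_eq (Finset.sum_const ε)

end NearbyVectors

section EigenvectorAverages

variable {X : Type*} [SeminormedAddCommGroup X] [NormedSpace ℂ X] {T : X →L[ℂ] X} {Λ : Finset ℂ}
  {y : ℂ → X}

lemma birkhoffAverage_norm_sum_eigenvector_le {P : ℕ} (hP : P ≠ 0) (hΛ : ∀ z ∈ Λ, z ^ P = 1)
    (hy : ∀ z ∈ Λ, T (y z) = z • y z) {x : X} {ε : ℝ} (hyx : ∀ z ∈ Λ, ‖y z - x‖ ≤ ε) :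
    birkhoffAverage ℝ T norm P (∑ z ∈ Λ, y z) ≤ √Λ.card * ‖x‖ + Λ.card * ε := by
  have term_le (n : ℕ) :
      ‖T^[n] (∑ z ∈ Λ, y z)‖ ≤ ‖∑ z ∈ Λ, z ^ n‖ * ‖x‖ + Λ.card * ε := by
    rw [iterate_sum_eigenvector hy]
    refine norm_sum_smul_le_of_norm_sub_le (fun z hz ↦ ?_) hyx
    rw [norm_pow, Complex.norm_eq_one_of_pow_eq_one (hΛ z hz) hP, one_pow]
  rw [birkhoffAverage, birkhoffSum, smul_eq_mul, inv_mul_le_iff₀ (by positivity)]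
  calc ∑ n ∈ Finset.range P, ‖T^[n] (∑ z ∈ Λ, y z)‖
      ≤ ∑ n ∈ Finset.range P, (‖∑ z ∈ Λ, z ^ n‖ * ‖x‖ + Λ.card * ε) :=
        Finset.sum_le_sum fun n _ ↦ term_le n
    _ = (∑ n ∈ Finset.range P, ‖∑ z ∈ Λ, z ^ n‖) * ‖x‖ + P * (Λ.card * ε) := by
        rw [Finset.sum_add_distrib, Finset.sum_mul, Finset.sum_const, Finset.card_range,
          nsmul_eq_mul]
    _ ≤ P * √Λ.card * ‖x‖ + P * (Λ.card * ε) := by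
        gcongr
        exact sum_norm_sum_pow_le_of_pow_eq_one hP hΛ
    _ = P * (√Λ.card * ‖x‖ + Λ.card * ε) := by ring

lemma average_eigenvectors_mem_periodicPtsOfMeanNormLE (hΛ_ne : Λ.Nonempty)
    (hΛ : ∀ z ∈ Λ, IsOfFinOrder z) (hy : ∀ z ∈ Λ, T (y z) = z • y z) {x : X} {ε : ℝ}
    (hyx : ∀ z ∈ Λ, ‖y z - x‖ ≤ ε) :
    (Λ.card : ℂ)⁻¹ • ∑ z ∈ Λ, y z ∈ periodicPtsOfMeanNormLE T (‖x‖ / √Λ.card + ε) := by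
  obtain ⟨P, hP, hΛP⟩ := exists_pos_forall_mem_pow_eq_one hΛ
  have card_pos : (0 : ℝ) < Λ.card := Nat.cast_pos.2 hΛ_ne.card_pos
  have sum_mem : ∑ z ∈ Λ, y z ∈ periodicPtsOfMeanNormLE T (√Λ.card * ‖x‖ + Λ.card * ε) :=
    ⟨P, hP, isPeriodicPt_sum_eigenvector hΛP hy,
      birkhoffAverage_norm_sum_eigenvector_le hP.ne' hΛP hy hyx⟩
  convert smul_mem_periodicPtsOfMeanNormLE (Λ.card : ℂ)⁻¹ sum_mem using 1
  rw [norm_inv, Complex.norm_natCast, mul_add, inv_mul_cancel_left₀ card_pos.ne', ← mul_assoc,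
    inv_mul_eq_div, Real.sqrt_div_self', one_div, inv_mul_eq_div]

end EigenvectorAverages

section Condensation

lemma exists_countable_forall_notMem_not_countable {X Y : Type*} [TopologicalSpace X]
    [SecondCountableTopology X] (R : X → Y → Prop) :
    ∃ D : Set Y, D.Countable ∧
      ∀ x, ∀ y ∉ D, R x y → ∀ V ∈ 𝓝 x, ¬ {z | ∃ v ∈ V, R v z}.Countable := by
  let B := {U ∈ TopologicalSpace.countableBasis X | {z | ∃ v ∈ U, R v z}.Countable}
  refine ⟨⋃ U ∈ B, {z | ∃ v ∈ U, R v z}, ?_, fun x y hyD hxy V hV V_countable ↦ hyD ?_⟩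
  · exact ((TopologicalSpace.countable_countableBasis X).mono (sep_subset _ _)).biUnion
      fun U hU ↦ hU.2
  obtain ⟨U, hU, hxU, hUV⟩ := (TopologicalSpace.isBasis_countableBasis X).mem_nhds_iff.1 hV
  have U_countable : {z | ∃ v ∈ U, R v z}.Countable := by
    refine V_countable.mono ?_
    rintro z ⟨v, hvU, hvz⟩
    exact ⟨v, hUV hvU, hvz⟩
  exact mem_iUnion₂.2 ⟨U, ⟨hU, U_countable⟩, x, hxU, hxy⟩

end Condensation

section PerfectlySpanning

/-- The eigenvectors of `T` whose eigenvalue lies in `Λ`. -/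
def eigenvectorsOver {𝕜 X : Type*} [Zero X] [SMul 𝕜 X] (T : X → X) (Λ : Set 𝕜) : Set X :=
  {x | x ≠ 0 ∧ ∃ l ∈ Λ, T x = l • x}

/-- The elements of `Λ` that are eigenvalues of `T` with an eigenvector in `V`. -/
def eigenvaluesOn {𝕜 X : Type*} [Zero X] [SMul 𝕜 X] (T : X → X) (Λ : Set 𝕜) (V : Set X) : Set 𝕜 :=
  {l | ∃ x ∈ V, x ≠ 0 ∧ l ∈ Λ ∧ T x = l • x}

/-- The eigenvectors of `T` with eigenvalue in `Λ` are perfectly spanning: those with eigenvalue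
outside any given countable set still span a dense subspace. -/
def HasPerfectlySpanningEigenvectors {𝕜 X : Type*} [Semiring 𝕜] [AddCommMonoid X] [Module 𝕜 X]
    [TopologicalSpace X] (T : X → X) (Λ : Set 𝕜) : Prop :=
  ∀ D : Set 𝕜, D.Countable →
    Dense (Submodule.span 𝕜 {x | ∃ l ∈ Λ, l ∉ D ∧ T x = l • x} : Set X)

lemma infinite_eigenvaluesOn_of_subset_closure {𝕜 X : Type*} [NormedField 𝕜]
    [NormedAddCommGroup X] [NormedSpace 𝕜 X] {T : X → X} (hT : Continuous T) {Λ M : Set 𝕜}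
    {V : Set X} (hV : IsOpen V) (h : eigenvectorsOver T Λ ⊆ closure (eigenvectorsOver T M))
    (h_inf : (eigenvaluesOn T Λ V).Infinite) : (eigenvaluesOn T M V).Infinite := by
  intro h_fin
  refine h_inf (h_fin.subset ?_)
  have isClosed : IsClosed (⋃ l ∈ eigenvaluesOn T M V, {x | T x = l • x}) :=
    h_fin.isClosed_biUnion fun l _ ↦ isClosed_eq hT (continuous_const_smul l)
  rintro l ⟨x, hxV, hx, hlΛ, hxl⟩
  have x_mem : x ∈ ⋃ l ∈ eigenvaluesOn T M V, {x | T x = l • x} := by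
    have x_mem_closure : x ∈ closure (V ∩ eigenvectorsOver T M) :=
      hV.inter_closure ⟨hxV, h ⟨hx, l, hlΛ, hxl⟩⟩
    refine isClosed.closure_subset_iff.2 ?_ x_mem_closure
    rintro y ⟨hyV, hy, q, hqM, hyq⟩
    exact mem_biUnion ⟨y, hyV, hy, hqM, hyq⟩ hyq
  obtain ⟨q, hq, hxq⟩ := mem_iUnion₂.1 x_mem
  rwa [smul_left_injective 𝕜 hx (hxl.symm.trans hxq)]

lemma exists_card_eq_forall_eigenvector_of_infinite_eigenvaluesOn {𝕜 X : Type*} [Zero X] [SMul 𝕜 X]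
    {T : X → X} {Λ : Set 𝕜} {V : Set X} (h : (eigenvaluesOn T Λ V).Infinite) (k : ℕ) :
    ∃ (M : Finset 𝕜) (y : 𝕜 → X), M.card = k ∧ ∀ z ∈ M, z ∈ Λ ∧ y z ∈ V ∧ T (y z) = z • y z := by
  obtain ⟨M, hM, hM_card⟩ := h.exists_subset_card_eq k
  choose! y hyV _ hΛ hy using hM
  exact ⟨M, y, hM_card, fun z hz ↦ ⟨hΛ hz, hyV hz, hy hz⟩⟩

variable {X : Type*} [NormedAddCommGroup X] [NormedSpace ℂ X] {T : X →L[ℂ] X}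

lemma mem_meanNullPeriodicLimits_of_infinite_eigenvaluesOn {x : X}
    (h : ∀ η > 0, (eigenvaluesOn T {z : ℂ | IsOfFinOrder z} (Metric.ball x η)).Infinite) :
    x ∈ meanNullPeriodicLimits T := by
  refine mem_meanNullPeriodicLimits.2 fun ε hε ↦ Metric.mem_closure_iff.2 fun r hr ↦ ?_
  set η := min (ε / 2) (r / 2)
  have hη : 0 < η := lt_min (half_pos hε) (half_pos hr)
  obtain ⟨k, hk, hkε⟩ : ∃ k : ℕ, 0 < k ∧ ‖x‖ / √k ≤ ε / 2 := by
    have lim : Tendsto (fun k : ℕ ↦ ‖x‖ / √k) atTop (𝓝 0) :=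
      tendsto_const_nhds.div_atTop (Real.tendsto_sqrt_atTop.comp tendsto_natCast_atTop_atTop)
    exact ((eventually_gt_atTop 0).and (lim.eventually_le_const (half_pos hε))).exists
  obtain ⟨Λ, y, rfl, hΛy⟩ := exists_card_eq_forall_eigenvector_of_infinite_eigenvaluesOn (h η hη) k
  have hΛ : Λ.Nonempty := Finset.card_pos.1 hk
  have y_near : ∀ z ∈ Λ, ‖y z - x‖ ≤ η := fun z hz ↦ (mem_ball_iff_norm.1 (hΛy z hz).2.1).le
  refine ⟨(Λ.card : ℂ)⁻¹ • ∑ z ∈ Λ, y z, periodicPtsOfMeanNormLE_mono T ?_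
    (average_eigenvectors_mem_periodicPtsOfMeanNormLE hΛ (fun z hz ↦ (hΛy z hz).1)
      (fun z hz ↦ (hΛy z hz).2.2) y_near), ?_⟩
  · exact (add_le_add hkε (min_le_left _ _)).trans_eq (add_halves ε)
  · rw [dist_comm, dist_eq_norm]
    exact (norm_inv_card_smul_sum_sub_le ℂ hΛ y_near).trans_lt
      ((min_le_right _ _).trans_lt (half_lt_self hr))

theorem meanNullPeriodicLimits_eq_top [SecondCountableTopology X] {Λ : Set ℂ}
    (hspan : HasPerfectlySpanningEigenvectors T Λ)
    (hper : eigenvectorsOver T Λ ⊆ closure (eigenvectorsOver T {z : ℂ | IsOfFinOrder z})) :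
    meanNullPeriodicLimits T = ⊤ := by
  obtain ⟨D, hD, hD_unc⟩ := exists_countable_forall_notMem_not_countable
    fun (x : X) (l : ℂ) ↦ x ≠ 0 ∧ l ∈ Λ ∧ T x = l • x
  have span_le : Submodule.span ℂ {x | ∃ l ∈ Λ, l ∉ D ∧ T x = l • x} ≤
      meanNullPeriodicLimits T := by
    refine Submodule.span_le.2 ?_
    rintro x ⟨l, hlΛ, hlD, hxl⟩
    rcases eq_or_ne x 0 with rfl | hx
    · exact zero_mem _
    refine mem_meanNullPeriodicLimits_of_infinite_eigenvaluesOn fun η hη ↦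
      infinite_eigenvaluesOn_of_subset_closure T.continuous Metric.isOpen_ball hper fun h_fin ↦ ?_
    exact hD_unc x l hlD ⟨hx, hlΛ, hxl⟩ _ (Metric.ball_mem_nhds x hη) h_fin.countable
  rw [← SetLike.coe_set_eq, Submodule.top_coe, ← (isClosed_meanNullPeriodicLimits T).closure_eq]
  exact ((hspan D hD).mono span_le).closure_eq

end PerfectlySpanning

/-- Let `T` be a bounded linear operator on a complex separable
Banach space `X`. Assume that `T` has a perfectly spanning set of unimodular
eigenvectors, and that the periodic eigenvectors of `T` are dense in the set of all
unimodular eigenvectors. Then `F̄_T(HC(T))` is a dense `G_δ` subset of `F̄_T(X)`. -/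
theorem stmt18 {X : Type*} [NormedAddCommGroup X] [NormedSpace ℂ X] [CompleteSpace X]
    [TopologicalSpace.SeparableSpace X] [MeasurableSpace X] [BorelSpace X]
    (T : X →L[ℂ] X)
    (hspan : ∀ D : Set ℂ, D.Countable →
      Dense (↑(Submodule.span ℂ {x : X | ∃ l : ℂ, ‖l‖ = 1 ∧ l ∉ D ∧ T x = l • x}) :
        Set X))
    (hper : {x : X | x ≠ 0 ∧ ∃ l : ℂ, ‖l‖ = 1 ∧ T x = l • x} ⊆
      closure {x : X | x ≠ 0 ∧ ∃ l : ℂ, (∃ n : ℕ, 1 ≤ n ∧ l ^ n = 1) ∧ T x = l • x}) :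
    IsGδ {m : ↥(closure (FT (⇑T))) |
        (↑m.1 : Measure X) {x : X | Dense (Set.range fun n : ℕ => (⇑T)^[n] x)} = 1} ∧
      Dense {m : ↥(closure (FT (⇑T))) |
        (↑m.1 : Measure X) {x : X | Dense (Set.range fun n : ℕ => (⇑T)^[n] x)} = 1} := by
  have : SecondCountableTopology X := UniformSpace.secondCountable_of_separable X
  simp_rw [Order.one_le_iff_pos, ← isOfFinOrder_iff_pow_eq_one] at hper
  have eq_top : meanNullPeriodicLimits T = ⊤ := meanNullPeriodicLimits_eq_top hspan hper
  exact isGδ_and_dense_setOf_measure_dense_orbit_eq_one T.continuous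
    (periodicPointsMeanDense_of_meanNullPeriodicLimits_eq_top eq_top)
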